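/- arXiv:1410.2637 — 10 statements merged into one kernel-verified Lean document; each statement's English description precedes it below -/
import Mathlib

section
/- Let ν ≥ 1 be an integer and s ≥ 1 a real number, and let M_s(r) := sup_{k∈ℕ} log(r^{νk}/((νk)!)^s) for r > 0. Then M_s(r) ≤ s·r^{1/s} for every r > 0, and there exists r₀ > 0 (depending on s and ν) such that (s/(4νe))·r^{1/s} ≤ M_s(r) for all r ≥ r₀. -/
/-- The Gevrey associated function
`M_s(r) = sup_{k ∈ ℕ} log ( r^{νk} / ((νk)!)^s )`. -/
noncomputable def gevreyM (ν : ℕ) (s : ℝ) (r : ℝ) : ℝ :=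
  ⨆ k : ℕ, Real.log (r ^ (ν * k) / ((ν * k).factorial : ℝ) ^ s)

lemma gevrey_term (N : ℕ) (s : ℝ) (hs : 1 ≤ s) (r : ℝ) (hr : 0 < r) :
    Real.log (r ^ N / (N.factorial : ℝ) ^ s)
      = s * (N * Real.log (r ^ (1 / s)) - Real.log (N.factorial : ℝ)) := by
  have hf : (0 : ℝ) < N.factorial := by exact_mod_cast N.factorial_pos
  rw [Real.log_div (by positivity) (by positivity), Real.log_pow, Real.log_rpow hf,
    Real.log_rpow hr]
  field_simp

lemma gevrey_term_le (N : ℕ) (s : ℝ) (hs : 1 ≤ s) (r : ℝ) (hr : 0 < r) :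
    Real.log (r ^ N / (N.factorial : ℝ) ^ s) ≤ s * r ^ (1 / s) := by
  have hf : (0 : ℝ) < N.factorial := by exact_mod_cast N.factorial_pos
  rw [gevrey_term N s hs r hr]
  have ht : 0 < r ^ (1 / s) := by positivity
  set t := r ^ (1 / s)
  have h1 : t ^ N / N.factorial ≤ Real.exp t := Real.pow_div_factorial_le_exp t ht.le N
  have h2 := Real.log_le_log (by positivity) h1
  rw [Real.log_exp, Real.log_div (by positivity) (by positivity), Real.log_pow] at h2
  exact mul_le_mul_of_nonneg_left h2 (by linarith)

theorem stmt_0 (ν : ℕ) (hν : 1 ≤ ν) (s : ℝ) (hs : 1 ≤ s) :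
    (∀ r : ℝ, 0 < r → gevreyM ν s r ≤ s * r ^ (1 / s)) ∧
    (∃ r₀ : ℝ, 0 < r₀ ∧ ∀ r : ℝ, r₀ ≤ r →
      s / (4 * ν * Real.exp 1) * r ^ (1 / s) ≤ gevreyM ν s r) := by
  have hs0 : 0 < s := by linarith
  have hν1 : (1 : ℝ) ≤ ν := by exact_mod_cast hν
  have hν0 : (0 : ℝ) < ν := by linarith
  have he : 0 < Real.exp 1 := Real.exp_pos 1
  refine ⟨fun r hr => ciSup_le fun k => gevrey_term_le _ s hs r hr, ?_⟩
  refine ⟨(4 * Real.exp 1 * ν) ^ s, by positivity, fun r hr0 => ?_⟩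
  have hr : 0 < r := lt_of_lt_of_le (by positivity) hr0
  have hbdd : BddAbove (Set.range fun k : ℕ =>
      Real.log (r ^ (ν * k) / ((ν * k).factorial : ℝ) ^ s)) :=
    ⟨s * r ^ (1 / s), by rintro _ ⟨k, rfl⟩; exact gevrey_term_le _ s hs r hr⟩
  have htl : 4 * Real.exp 1 * ν ≤ r ^ (1 / s) := by
    have h := Real.rpow_le_rpow (by positivity) hr0 (by positivity : 0 ≤ 1 / s)
    rwa [← Real.rpow_mul (by positivity), mul_one_div_cancel hs0.ne', Real.rpow_one] at h
  have hle := le_ciSup hbdd ⌊r ^ (1 / s) / (Real.exp 1 * ν)⌋₊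
  refine le_trans ?_ hle
  rw [gevrey_term _ s hs r hr]
  have ht : 0 < r ^ (1 / s) := by positivity
  set t := r ^ (1 / s)
  set k := ⌊t / (Real.exp 1 * ν)⌋₊ with hk
  have hk1 : (k : ℝ) ≤ t / (Real.exp 1 * ν) := Nat.floor_le (by positivity)
  have hk2 : t / (Real.exp 1 * ν) < k + 1 := Nat.lt_floor_add_one _
  rw [le_div_iff₀ (by positivity)] at hk1
  have h4 : 4 ≤ t / (Real.exp 1 * ν) := by
    rw [le_div_iff₀ (by positivity)]; linarith
  have hk0 : (0 : ℝ) < k := by linarith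
  have hN0 : (0 : ℝ) < ((ν * k : ℕ) : ℝ) := by push_cast; positivity
  have hN : ((ν * k : ℕ) : ℝ) = ν * k := by push_cast; ring
  have hf : Real.log ((ν * k).factorial : ℝ) ≤ ((ν * k : ℕ) : ℝ) * Real.log ((ν * k : ℕ) : ℝ) := by
    rw [← Real.log_pow]
    apply Real.log_le_log (by exact_mod_cast Nat.factorial_pos _)
    exact_mod_cast Nat.factorial_le_pow _
  have hl : Real.log ((ν * k : ℕ) : ℝ) + 1 ≤ Real.log t := by
    have h : Real.log (((ν * k : ℕ) : ℝ) * Real.exp 1) ≤ Real.log t :=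
      Real.log_le_log (by positivity) (by rw [hN]; linarith)
    rwa [Real.log_mul hN0.ne' he.ne', Real.log_exp] at h
  have hm := mul_le_mul_of_nonneg_left hl hN0.le
  have hq : t / (4 * ν * Real.exp 1) ≤ ((ν * k : ℕ) : ℝ) := by
    rw [hN]
    have : t / (4 * ν * Real.exp 1) = t / (Real.exp 1 * ν) / 4 := by field_simp
    rw [this]
    nlinarith
  calc s / (4 * ν * Real.exp 1) * t = s * (t / (4 * ν * Real.exp 1)) := by ring
    _ ≤ _ := mul_le_mul_of_nonneg_left (by linarith) hs0.le
end

section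
/- Let ν ≥ 1 be an integer and s ≥ 1 a real number. There exists r₀ > 0 (depending on s and ν) such that for all r ≥ r₀: inf_{p∈ℕ, p≥1} (νp)^{νps} · r^{-νp} ≤ exp(−(s/(4νe))·r^{1/s}). -/
theorem stmt_2 (ν : ℕ) (hν : 1 ≤ ν) (s : ℝ) (hs : 1 ≤ s) :
    ∃ r₀ : ℝ, 0 < r₀ ∧ ∀ r : ℝ, r₀ ≤ r →
      (⨅ p : {p : ℕ // 0 < p},
          ((ν * p.1 : ℝ)) ^ ((ν * p.1 : ℝ) * s) * r ^ (-(ν * p.1 : ℝ)))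
        ≤ Real.exp (-(s / (4 * ν * Real.exp 1)) * r ^ (1 / s)) := by
  have hν' : (1:ℝ) ≤ ν := by exact_mod_cast hν
  have hν0 : (0:ℝ) < ν := by linarith
  have hs0 : 0 < s := by linarith
  have he : 0 < Real.exp 1 := Real.exp_pos 1
  have hb : 0 < 2 * Real.exp 1 * ν := by positivity
  refine ⟨(2 * Real.exp 1 * ν) ^ s, Real.rpow_pos_of_pos hb s, fun r hr => ?_⟩
  have hr0 : 0 < r := lt_of_lt_of_le (Real.rpow_pos_of_pos hb s) hr
  obtain ⟨t, ht⟩ : ∃ t, t = r ^ (1 / s) := ⟨_, rfl⟩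
  have ht0 : 0 < t := ht ▸ Real.rpow_pos_of_pos hr0 _
  have hlog : Real.log r = s * Real.log t := by
    rw [ht, Real.log_rpow hr0]; field_simp
  have htb : 2 * Real.exp 1 * ν ≤ t := by
    have h := Real.rpow_le_rpow (Real.rpow_pos_of_pos hb s).le hr
      (by positivity : 0 ≤ 1 / s)
    rwa [← Real.rpow_mul hb.le, mul_one_div_cancel hs0.ne', Real.rpow_one, ← ht] at h
  rw [← ht]
  set p := ⌊t / (Real.exp 1 * ν)⌋₊ with hp
  have h2 : 2 ≤ t / (Real.exp 1 * ν) := by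
    rw [le_div_iff₀ (by positivity)]; linarith
  have hple : (p:ℝ) ≤ t / (Real.exp 1 * ν) := Nat.floor_le (by linarith)
  have hplt : t / (Real.exp 1 * ν) < p + 1 := Nat.lt_floor_add_one _
  have hp0 : 0 < p := by
    have : (0:ℝ) < p := by linarith
    exact_mod_cast this
  have hp0' : (0:ℝ) < p := by exact_mod_cast hp0
  have hbdd : BddBelow (Set.range fun p : {p : ℕ // 0 < p} =>
      ((ν * p.1 : ℝ)) ^ ((ν * p.1 : ℝ) * s) * r ^ (-(ν * p.1 : ℝ))) := by
    refine ⟨0, ?_⟩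
    rintro _ ⟨q, rfl⟩
    positivity
  refine (ciInf_le hbdd ⟨p, hp0⟩).trans ?_
  show ((ν * p : ℝ)) ^ ((ν * p : ℝ) * s) * r ^ (-(ν * p : ℝ)) ≤ _
  have hm0 : (0:ℝ) < ν * p := by positivity
  have hup : (ν * p : ℝ) ≤ t / Real.exp 1 := by
    rw [le_div_iff₀ (by positivity)] at hple ⊢
    linarith
  have hlow : t / (4 * ν * Real.exp 1) ≤ ν * p := by
    have h3 : t / (Real.exp 1 * ν) ≤ 2 * p := by linarith
    have h4 : t / (4 * ν * Real.exp 1) = t / (Real.exp 1 * ν) / 4 := by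
      field_simp
    rw [h4]
    nlinarith
  have hlm : Real.log (ν * p) ≤ Real.log t - 1 := by
    have := Real.log_le_log hm0 hup
    rwa [Real.log_div ht0.ne' he.ne', Real.log_exp] at this
  rw [Real.rpow_def_of_pos hm0, Real.rpow_def_of_pos hr0, ← Real.exp_add, hlog,
    Real.exp_le_exp]
  have h5 : -(s / (4 * ν * Real.exp 1)) * t = -(s * (t / (4 * ν * Real.exp 1))) := by ring
  rw [h5]
  have h6 := mul_le_mul_of_nonneg_left hlow hs0.le
  have h7 := mul_le_mul_of_nonneg_left hlm (mul_pos hs0 hm0).le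
  linarith
end

section
/- Let s ≥ 1 be a real number. There exists r₀ > 0 (depending on s) such that for all r ≥ r₀: inf_{p∈ℕ, p≥1} (2p)^{2ps} · r^{-2p} ≤ exp(−(s/(8e))·r^{1/s}). -/
theorem stmt_3 (s : ℝ) (hs : 1 ≤ s) :
    ∃ r₀ : ℝ, 0 < r₀ ∧ ∀ r : ℝ, r₀ ≤ r →
      (⨅ p : {p : ℕ // 0 < p},
          ((2 * p.1 : ℝ)) ^ ((2 * p.1 : ℝ) * s) * r ^ (-(2 * p.1 : ℝ)))
        ≤ Real.exp (-(s / (8 * Real.exp 1)) * r ^ (1 / s)) := by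
  have he : 0 < Real.exp 1 := Real.exp_pos 1
  have hs0 : 0 < s := by linarith
  refine ⟨(2 * Real.exp 1) ^ s, by positivity, fun r hr => ?_⟩
  have hr0 : 0 < r := lt_of_lt_of_le (by positivity) hr
  set x := r ^ (1 / s) with hx
  have hx0 : 0 < x := by positivity
  have hxe : 2 * Real.exp 1 ≤ x := by
    have h := Real.rpow_le_rpow (by positivity) hr (by positivity : 0 ≤ 1 / s)
    rwa [← Real.rpow_mul (by positivity), mul_one_div_cancel hs0.ne', Real.rpow_one] at h
  have hlogx : Real.log r = s * Real.log x := by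
    rw [hx, Real.log_rpow hr0]; field_simp
  set y := x / (2 * Real.exp 1) with hy
  have hxy : x = y * (2 * Real.exp 1) := by rw [hy]; field_simp
  have hy1 : 1 ≤ y := by rw [hy, le_div_iff₀ (by positivity)]; linarith
  have hp : 0 < ⌊y⌋₊ := Nat.floor_pos.mpr hy1
  have hple : (⌊y⌋₊ : ℝ) ≤ y := Nat.floor_le (by linarith)
  have hplt : y < ⌊y⌋₊ + 1 := Nat.lt_floor_add_one y
  have hbdd : BddBelow (Set.range fun p : {p : ℕ // 0 < p} =>
      ((2 * p.1 : ℝ)) ^ ((2 * p.1 : ℝ) * s) * r ^ (-(2 * p.1 : ℝ))) := by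
    refine ⟨0, ?_⟩
    rintro _ ⟨p, rfl⟩
    dsimp only
    positivity
  refine (ciInf_le hbdd ⟨⌊y⌋₊, hp⟩).trans ?_
  dsimp only
  have hp1 : (1 : ℝ) ≤ (⌊y⌋₊ : ℝ) := by exact_mod_cast hp
  generalize (⌊y⌋₊ : ℝ) = q at *
  have hq : 0 < 2 * q := by linarith
  rw [Real.rpow_def_of_pos hq, Real.rpow_def_of_pos hr0, ← Real.exp_add, Real.exp_le_exp, hlogx]
  have hl : Real.log (2 * q) + 1 ≤ Real.log x := by
    rw [← Real.log_exp 1, ← Real.log_mul hq.ne' he.ne']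
    apply Real.log_le_log (by positivity)
    rw [hxy]
    nlinarith
  have h1 : s / (8 * Real.exp 1) * x = s * (y / 4) := by rw [hxy]; field_simp; norm_num
  have h2 : s * (y / 4) ≤ s * (2 * q) := by
    apply mul_le_mul_of_nonneg_left _ hs0.le
    linarith
  have h3 : 0 ≤ (s * (2 * q)) * (Real.log x - Real.log (2 * q) - 1) :=
    mul_nonneg (by positivity) (by linarith)
  rw [neg_mul, h1]
  nlinarith
end

section
/- Let ν ≥ 1 be an integer and (M_k)_{k∈ℕ} a sequence of positive reals satisfying (M.0), (G), and (M.2) with constants A ≥ 1 and H ≥ 1, and let M(r) := sup_{k∈ℕ} log(r^{νk}/M_{νk}). Then for every r > 0: M(r/(√A·H)) ≤ (1/2)·M(r); equivalently, exp(−(1/2)M(r)) ≤ exp(−M(r/(√A·H))). -/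
/-- The associated function `M(r) = sup_{k ∈ ℕ} log ( r^{νk} / M_{νk} )`. -/
noncomputable def assocM (ν : ℕ) (Mk : ℕ → ℝ) (r : ℝ) : ℝ :=
  ⨆ k : ℕ, Real.log (r ^ (ν * k) / Mk (ν * k))

theorem stmt_6 (ν : ℕ) (hν : 1 ≤ ν) (Mk : ℕ → ℝ) (hMpos : ∀ k, 0 < Mk k)
    (hM0 : Mk 0 = 1)
    (A H : ℝ) (hA : 1 ≤ A) (hH : 1 ≤ H)
    (hM2 : ∀ k : ℕ, Mk (2 * k) ≤ A * H ^ (2 * k) * Mk k ^ 2)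
    (hG : ∃ C₀ > (0 : ℝ), ∃ l > (0 : ℝ), ∀ k : ℕ, (k.factorial : ℝ) ≤ C₀ * l ^ k * Mk k) :
    ∀ r : ℝ, 0 < r →
      assocM ν Mk (r / (Real.sqrt A * H)) ≤ (1 / 2) * assocM ν Mk r := by
  intro r hr
  obtain ⟨C₀, hC, l, hl, hG⟩ := hG
  have hbdd : BddAbove (Set.range fun k : ℕ => Real.log (r ^ (ν * k) / Mk (ν * k))) := by
    refine ⟨Real.log (C₀ * Real.exp (l * r)), ?_⟩
    rintro _ ⟨k, rfl⟩
    simp only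
    generalize ν * k = n
    have hm := hMpos n
    apply Real.log_le_log (by positivity)
    have h1 := Real.pow_div_factorial_le_exp (l * r) (by positivity) n
    have hf : (0 : ℝ) < n.factorial := by positivity
    rw [div_le_iff₀ hf, mul_pow] at h1
    rw [div_le_iff₀ hm]
    have h2 := hG n
    have hln : 0 < l ^ n := by positivity
    have h3 : l ^ n * r ^ n ≤ l ^ n * (C₀ * Real.exp (l * r) * Mk n) :=
      calc l ^ n * r ^ n ≤ Real.exp (l * r) * n.factorial := h1
        _ ≤ Real.exp (l * r) * (C₀ * l ^ n * Mk n) := by gcongr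
        _ = _ := by ring
    exact le_of_mul_le_mul_left h3 hln
  unfold assocM
  have hA0 : 0 < A := by linarith
  have hH0 : 0 < H := by linarith
  have hs : 0 < Real.sqrt A := Real.sqrt_pos.2 hA0
  apply ciSup_le
  intro k
  rcases Nat.eq_zero_or_pos k with rfl | hk
  · have h0 := le_ciSup hbdd 0
    simp only [mul_zero, pow_zero, hM0, div_one, Real.log_one] at h0 ⊢
    linarith
  · have h0 := le_ciSup hbdd (2 * k)
    have hn : ν * k ≠ 0 := by positivity
    rw [show ν * (2 * k) = 2 * (ν * k) by ring] at h0
    generalize ν * k = n at h0 hn ⊢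
    have hm := hMpos n
    have hm2 := hMpos (2 * n)
    have key : 2 * Real.log ((r / (Real.sqrt A * H)) ^ n / Mk n)
        ≤ Real.log (r ^ (2 * n) / Mk (2 * n)) := by
      have e : 2 * Real.log ((r / (Real.sqrt A * H)) ^ n / Mk n)
          = Real.log (((r / (Real.sqrt A * H)) ^ n / Mk n) ^ 2) := by
        rw [Real.log_pow]; norm_num
      rw [e]
      apply Real.log_le_log (by positivity)
      have e2 : ((r / (Real.sqrt A * H)) ^ n / Mk n) ^ 2
          = r ^ (2 * n) / (A ^ n * H ^ (2 * n) * Mk n ^ 2) := by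
        have : A ^ n = Real.sqrt A ^ (2 * n) := by rw [pow_mul, Real.sq_sqrt hA0.le]
        rw [this, div_pow, div_pow, div_pow, mul_pow, mul_pow, div_div]
        ring
      rw [e2]
      have hAn : A ≤ A ^ n := le_self_pow₀ hA hn
      apply div_le_div_of_nonneg_left (by positivity) hm2
      refine (hM2 n).trans ?_
      gcongr
    linarith
end

section
/- Let ν ≥ 1 be an integer and (M_k)_{k∈ℕ} a sequence of positive reals satisfying (M.0) and (G), with associated function M(r) := sup_{k∈ℕ} log(r^{νk}/M_{νk}). Let (λ_j)_{j≥1} be positive reals, (a_j)_{j≥1} nonnegative reals, and C > 0, h > 0 constants such that for every m ∈ ℕ the series ∑_{j≥1} λ_j^{2m} a_j² converges and ∑_{j≥1} λ_j^{2m} a_j² ≤ C² · h^{2νm} · M_{νm}². Then for every j ≥ 1: a_j ≤ C · exp(−M(λ_j^{1/ν}/h)). -/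
theorem stmt_8 (ν : ℕ) (hν : 1 ≤ ν) (Mk : ℕ → ℝ) (hMpos : ∀ k, 0 < Mk k)
    (hM0 : Mk 0 = 1)
    (hG : ∃ C₀ > (0 : ℝ), ∃ l > (0 : ℝ), ∀ k : ℕ, (k.factorial : ℝ) ≤ C₀ * l ^ k * Mk k)
    (lam a : ℕ → ℝ) (hlam : ∀ j, 0 < lam j) (ha : ∀ j, 0 ≤ a j)
    (C h : ℝ) (hC : 0 < C) (hh : 0 < h)
    (hsum : ∀ m : ℕ, Summable (fun j => lam j ^ (2 * m) * a j ^ 2))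
    (hbd : ∀ m : ℕ,
      (∑' j, lam j ^ (2 * m) * a j ^ 2) ≤ C ^ 2 * h ^ (2 * ν * m) * Mk (ν * m) ^ 2) :
    ∀ j, a j ≤ C * Real.exp (-(assocM ν Mk (lam j ^ (1 / (ν : ℝ)) / h))) := by
  intro j
  rcases (ha j).eq_or_lt with h0 | hpos
  · rw [← h0]; positivity
  have key : assocM ν Mk (lam j ^ (1 / (ν : ℝ)) / h) ≤ Real.log (C / a j) := by
    unfold assocM
    refine ciSup_le fun k => ?_
    have hl := hlam j
    have hM := hMpos (ν * k)
    have hν0 : (ν : ℝ) ≠ 0 := by positivity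
    have h1 : (lam j ^ (1 / (ν : ℝ))) ^ (ν * k) = lam j ^ k := by
      rw [pow_mul, ← Real.rpow_natCast (lam j ^ (1 / (ν : ℝ))) ν, ← Real.rpow_mul hl.le,
        one_div_mul_cancel hν0, Real.rpow_one]
    have h2 : lam j ^ (2 * k) * a j ^ 2 ≤ C ^ 2 * h ^ (2 * ν * k) * Mk (ν * k) ^ 2 :=
      ((hsum k).le_tsum j (fun i _ => by have := hlam i; positivity)).trans (hbd k)
    have h3 : lam j ^ k * a j ≤ C * h ^ (ν * k) * Mk (ν * k) := by
      refine (sq_le_sq₀ (by positivity) (by positivity)).1 ?_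
      calc _ = lam j ^ (2 * k) * a j ^ 2 := by ring
        _ ≤ _ := h2
        _ = _ := by ring
    apply Real.log_le_log (by positivity)
    rw [div_pow, h1, div_div, div_le_div_iff₀ (by positivity) hpos]
    linarith
  have h4 : Real.exp (-(Real.log (C / a j))) ≤
      Real.exp (-(assocM ν Mk (lam j ^ (1 / (ν : ℝ)) / h))) :=
    Real.exp_le_exp.mpr (neg_le_neg key)
  rw [Real.exp_neg, Real.exp_log (by positivity), inv_div] at h4
  calc a j = C * (a j / C) := by field_simp
    _ ≤ _ := by gcongr
end

section
/- Let ν ≥ 1 be an integer and (M_k)_{k∈ℕ} a sequence of positive reals satisfying (M.0), (M.1), (M.2) and (G), with associated function M(r) := sup_{k∈ℕ} log(r^{νk}/M_{νk}). Let (λ_j)_{j≥1} be positive reals with λ_j ≥ λ₁ > 0 for all j and ∑_{j≥1} λ_j^{−p₀} < ∞ for some p₀ ∈ ℕ, and let (a_j)_{j≥1} be nonnegative reals for which there exist C > 0 and L > 0 with a_j ≤ C · exp(−M(L·λ_j^{1/ν})) for all j. Then there exist constants C̃ > 0 and h̃ > 0 such that for every m ∈ ℕ: ∑_{j≥1} λ_j^{2m}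 a_j² ≤ C̃² · h̃^{2νm} · M_{νm}². -/
theorem aux_le_assocM (ν : ℕ) (Mk : ℕ → ℝ) (hMpos : ∀ k, 0 < Mk k)
    (hG : ∃ C₀ > (0 : ℝ), ∃ l > (0 : ℝ), ∀ k : ℕ, (k.factorial : ℝ) ≤ C₀ * l ^ k * Mk k)
    (r : ℝ) (hr : 0 < r) (k : ℕ) :
    Real.exp (-(assocM ν Mk r)) ≤ Mk (ν * k) / r ^ (ν * k) := by
  obtain ⟨C₀, hC₀, l, hl, hG⟩ := hG
  have hb : BddAbove (Set.range fun k : ℕ => Real.log (r ^ (ν * k) / Mk (ν * k))) := by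
    refine ⟨Real.log (C₀ * Real.exp (l * r)), ?_⟩
    rintro _ ⟨k, rfl⟩
    have hM := hMpos (ν * k)
    refine Real.log_le_log (by positivity) ?_
    rw [div_le_iff₀ hM]
    have h1 := Real.pow_div_factorial_le_exp (l * r) (by positivity) (ν * k)
    have hf : (0 : ℝ) < ((ν * k).factorial : ℝ) := by positivity
    rw [div_le_iff₀ hf, mul_pow] at h1
    have h2 := hG (ν * k)
    have hlk : 0 < l ^ (ν * k) := by positivity
    refine le_of_mul_le_mul_left ?_ hlk
    calc l ^ (ν * k) * r ^ (ν * k) ≤ Real.exp (l * r) * ((ν * k).factorial : ℝ) := h1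
      _ ≤ Real.exp (l * r) * (C₀ * l ^ (ν * k) * Mk (ν * k)) := by gcongr
      _ = _ := by ring
  have h := le_ciSup hb k
  have hM := hMpos (ν * k)
  have hpos : 0 < r ^ (ν * k) / Mk (ν * k) := by positivity
  calc Real.exp (-(assocM ν Mk r)) ≤ Real.exp (-Real.log (r ^ (ν * k) / Mk (ν * k))) := by
        apply Real.exp_le_exp.2
        exact neg_le_neg h
    _ = _ := by rw [Real.exp_neg, Real.exp_log hpos, inv_div]

theorem aux_shift (Mk : ℕ → ℝ) (hMpos : ∀ k, 0 < Mk k)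
    (A H : ℝ) (hA : 1 ≤ A) (hH : 1 ≤ H)
    (hM1 : ∀ k : ℕ, Mk (k + 1) ≤ A * H ^ k * Mk k) (n q : ℕ) :
    Mk (n + q) ≤ A ^ q * H ^ (q * q) * (H ^ q) ^ n * Mk n := by
  induction q with
  | zero => simp
  | succ q ih =>
    have hn := hMpos n
    calc Mk (n + (q + 1)) ≤ A * H ^ (n + q) * Mk (n + q) := hM1 (n + q)
      _ ≤ A * H ^ (n + q) * (A ^ q * H ^ (q * q) * (H ^ q) ^ n * Mk n) := by gcongr
      _ = A ^ (q + 1) * H ^ (q * q + q) * (H ^ (q + 1)) ^ n * Mk n := by ring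
      _ ≤ A ^ (q + 1) * H ^ ((q + 1) * (q + 1)) * (H ^ (q + 1)) ^ n * Mk n := by
        gcongr
        nlinarith

theorem stmt_9 (ν : ℕ) (hν : 1 ≤ ν) (Mk : ℕ → ℝ) (hMpos : ∀ k, 0 < Mk k)
    (hM0 : Mk 0 = 1)
    (A H : ℝ) (hA : 1 ≤ A) (hH : 1 ≤ H)
    (hM1 : ∀ k : ℕ, Mk (k + 1) ≤ A * H ^ k * Mk k)
    (hM2 : ∀ k : ℕ, Mk (2 * k) ≤ A * H ^ (2 * k) * Mk k ^ 2)
    (hG : ∃ C₀ > (0 : ℝ), ∃ l > (0 : ℝ), ∀ k : ℕ, (k.factorial : ℝ) ≤ C₀ * l ^ k * Mk k)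
    (lam a : ℕ → ℝ) (hlam : ∀ j, 0 < lam j) (hlb : ∀ j, lam 0 ≤ lam j)
    (ha : ∀ j, 0 ≤ a j)
    (p₀ : ℕ) (hp₀ : Summable (fun j => 1 / lam j ^ p₀))
    (C L : ℝ) (hC : 0 < C) (hL : 0 < L)
    (hdecay : ∀ j, a j ≤ C * Real.exp (-(assocM ν Mk (L * lam j ^ (1 / (ν : ℝ)))))) :
    ∃ C' > (0 : ℝ), ∃ h' > (0 : ℝ), ∀ m : ℕ,
      Summable (fun j => lam j ^ (2 * m) * a j ^ 2) ∧
      (∑' j, lam j ^ (2 * m) * a j ^ 2) ≤ C' ^ 2 * h' ^ (2 * ν * m) * Mk (ν * m) ^ 2 := by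
  have hLp : ∀ j m, lam j ^ m * a j ≤
      C * (Mk (ν * (m + p₀)) / L ^ (ν * (m + p₀))) * (1 / lam j ^ p₀) := by
    intro j m
    have hl := hlam j
    have h1 := aux_le_assocM ν Mk hMpos hG (L * lam j ^ (1 / (ν : ℝ)))
      (mul_pos hL (Real.rpow_pos_of_pos hl _)) (m + p₀)
    have h2 : (L * lam j ^ (1 / (ν : ℝ))) ^ (ν * (m + p₀))
        = L ^ (ν * (m + p₀)) * (lam j ^ m * lam j ^ p₀) := by
      rw [mul_pow, pow_mul (lam j ^ (1 / (ν : ℝ))), one_div,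
        Real.rpow_inv_natCast_pow hl.le (by omega), pow_add (lam j)]
    rw [h2] at h1
    calc lam j ^ m * a j ≤ lam j ^ m * (C * (Mk (ν * (m + p₀)) /
          (L ^ (ν * (m + p₀)) * (lam j ^ m * lam j ^ p₀)))) := by
          gcongr
          exact (hdecay j).trans (by gcongr)
      _ = _ := by field_simp
  have hsq : Summable (fun j => (1 / lam j ^ p₀) ^ 2) := by
    have hnn : ∀ j, 0 ≤ 1 / lam j ^ p₀ := fun j => by have := hlam j; positivity
    refine Summable.of_nonneg_of_le (fun j => by positivity) (fun j => ?_)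
      (hp₀.mul_left (∑' i, 1 / lam i ^ p₀))
    rw [sq]
    exact mul_le_mul_of_nonneg_right (hp₀.le_tsum j fun i _ => hnn i) (hnn j)
  set S := ∑' j, (1 / lam j ^ p₀) ^ 2 with hS
  have hS0 : 0 ≤ S := tsum_nonneg fun j => by positivity
  have hH0 : 0 < H := by linarith
  have hA0 : 0 < A := by linarith
  set q := ν * p₀ with hq
  refine ⟨C * (A ^ q * H ^ (q * q) / L ^ q) * Real.sqrt (S + 1), by positivity,
    H ^ q / L, by positivity, fun m => ?_⟩
  set B := Mk (ν * (m + p₀)) / L ^ (ν * (m + p₀)) with hB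
  have hB0 : 0 < B := by have := hMpos (ν * (m + p₀)); positivity
  have hterm : ∀ j, lam j ^ (2 * m) * a j ^ 2 ≤ (C * B) ^ 2 * (1 / lam j ^ p₀) ^ 2 := by
    intro j
    have hl := hlam j
    have haj := ha j
    calc lam j ^ (2 * m) * a j ^ 2 = (lam j ^ m * a j) ^ 2 := by ring
      _ ≤ (C * B * (1 / lam j ^ p₀)) ^ 2 := 
        pow_le_pow_left₀ (by positivity) (hLp j m) 2
      _ = _ := by ring
  have hsum : Summable (fun j => lam j ^ (2 * m) * a j ^ 2) :=
    Summable.of_nonneg_of_le (fun j => by have := hlam j; positivity) hterm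
      (hsq.mul_left _)
  refine ⟨hsum, ?_⟩
  have hBle : B ≤ (A ^ q * H ^ (q * q) / L ^ q) * (H ^ q / L) ^ (ν * m) * Mk (ν * m) := by
    have h := aux_shift Mk hMpos A H hA hH hM1 (ν * m) q
    have e : ν * (m + p₀) = ν * m + q := by rw [hq]; ring
    rw [hB, e]
    calc Mk (ν * m + q) / L ^ (ν * m + q)
        ≤ (A ^ q * H ^ (q * q) * (H ^ q) ^ (ν * m) * Mk (ν * m)) / L ^ (ν * m + q) := by gcongr
      _ = _ := by rw [div_pow, pow_add]; field_simp
  calc (∑' j, lam j ^ (2 * m) * a j ^ 2)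
      ≤ ∑' j, (C * B) ^ 2 * (1 / lam j ^ p₀) ^ 2 := hsum.tsum_le_tsum hterm (hsq.mul_left _)
    _ = (C * B) ^ 2 * S := tsum_mul_left
    _ ≤ (C * ((A ^ q * H ^ (q * q) / L ^ q) * (H ^ q / L) ^ (ν * m) * Mk (ν * m))) ^ 2
        * (S + 1) := by
      gcongr
      linarith
    _ = (C * ((A ^ q * H ^ (q * q) / L ^ q) * (H ^ q / L) ^ (ν * m) * Mk (ν * m))) ^ 2
        * Real.sqrt (S + 1) ^ 2 := by rw [Real.sq_sqrt (by linarith)]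
    _ = _ := by
      have e : 2 * ν * m = (ν * m) * 2 := by ring
      rw [e, pow_mul (H ^ q / L)]
      simp only [mul_pow]
      ring
end

section
/- Let ν ≥ 1 be an integer and (λ_j)_{j≥1} positive reals with λ_j ≥ λ₁ > 0 for all j and ∑_{j≥1} λ_j^{−p₀} < ∞ for some p₀ ∈ ℕ. Let (f_j)_{j≥1} be complex numbers. Then the following are equivalent: (a) there exists C > 0 such that for every k ∈ ℕ: ∑_{j≥1} λ_j^{2k}|f_j|² ≤ ((νk)!)² · C^{2k+2}; (b) there exist C' > 0 and L' > 0 such that |f_j| ≤ C' · exp(−L'·λ_j^{1/ν}) for all j. -/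
theorem stmt_11 (ν : ℕ) (hν : 1 ≤ ν)
    (lam : ℕ → ℝ) (hlam : ∀ j, 0 < lam j) (hlb : ∀ j, lam 0 ≤ lam j)
    (p₀ : ℕ) (hp₀ : Summable (fun j => 1 / lam j ^ p₀))
    (f : ℕ → ℂ) :
    (∃ C > (0 : ℝ), ∀ k : ℕ,
        Summable (fun j => lam j ^ (2 * k) * ‖f j‖ ^ 2) ∧
        (∑' j, lam j ^ (2 * k) * ‖f j‖ ^ 2) ≤
          (((ν * k).factorial : ℝ)) ^ 2 * C ^ (2 * k + 2)) ↔
    (∃ C' > (0 : ℝ), ∃ L' > (0 : ℝ), ∀ j,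
        ‖f j‖ ≤ C' * Real.exp (-(L' * lam j ^ (1 / (ν : ℝ))))) := by
  have hν0 : (ν : ℝ) ≠ 0 := by positivity
  have hν1 : (1 : ℝ) ≤ ν := by exact_mod_cast hν
  have hxpos : ∀ j, 0 < lam j ^ (1 / (ν : ℝ)) := fun j => Real.rpow_pos_of_pos (hlam j) _
  have hxpow : ∀ j, (lam j ^ (1 / (ν : ℝ))) ^ ν = lam j := by
    intro j
    rw [one_div]
    exact Real.rpow_inv_natCast_pow (hlam j).le (by omega)
  constructor
  · rintro ⟨C, hC, H⟩
    have hD : 0 < C + 1 := by linarith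
    have he := Real.exp_pos 1
    refine ⟨C * Real.exp ν, by positivity, 1 / (Real.exp 1 * (C + 1)), by positivity, ?_⟩
    intro j
    have hx := hxpos j
    have hxp := hxpow j
    set x := lam j ^ (1 / (ν : ℝ)) with hxdef
    set k := ⌊x / (ν * (Real.exp 1 * (C + 1)))⌋₊ with hk
    have hden : 0 < (ν : ℝ) * (Real.exp 1 * (C + 1)) := by positivity
    have hk1 : (k : ℝ) ≤ x / (ν * (Real.exp 1 * (C + 1))) := Nat.floor_le (by positivity)
    have hk2 : x / (ν * (Real.exp 1 * (C + 1))) < k + 1 := Nat.lt_floor_add_one _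
    rw [le_div_iff₀ hden] at hk1
    rw [div_lt_iff₀ hden] at hk2
    obtain ⟨hs, hle⟩ := H k
    have h1 : lam j ^ (2 * k) * ‖f j‖ ^ 2 ≤ ((ν * k).factorial : ℝ) ^ 2 * C ^ (2 * k + 2) :=
      le_trans (hs.le_tsum j (fun i _ => by have := hlam i; positivity)) hle
    have h2 : lam j ^ k * ‖f j‖ ≤ ((ν * k).factorial : ℝ) * C ^ (k + 1) := by
      have hl := hlam j
      refine le_of_sq_le_sq ?_ (by positivity)
      calc (lam j ^ k * ‖f j‖) ^ 2 = lam j ^ (2 * k) * ‖f j‖ ^ 2 := by ring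
        _ ≤ _ := h1
        _ = _ := by ring
    rw [← hxp, ← pow_mul] at h2
    have h3 : ((ν * k).factorial : ℝ) ≤ ((ν * k : ℕ) : ℝ) ^ (ν * k) := by
      exact_mod_cast Nat.factorial_le_pow (ν * k)
    have h4 : C ^ k ≤ (C + 1) ^ (ν * k) := by
      calc C ^ k ≤ (C + 1) ^ k := by gcongr; linarith
        _ ≤ (C + 1) ^ (ν * k) := pow_le_pow_right₀ (by linarith) (Nat.le_mul_of_pos_left _ hν)
    have h5 : (((ν * k : ℕ) : ℝ) * (C + 1)) ^ (ν * k) ≤ (x * Real.exp (-1)) ^ (ν * k) := by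
      refine pow_le_pow_left₀ (by positivity) ?_ _
      rw [Real.exp_neg, ← div_eq_mul_inv, le_div_iff₀ he]
      push_cast
      linarith
    have h6 : x ^ (ν * k) * ‖f j‖ ≤ x ^ (ν * k) * (C * Real.exp (-1) ^ (ν * k)) := by
      calc x ^ (ν * k) * ‖f j‖ ≤ ((ν * k).factorial : ℝ) * C ^ (k + 1) := h2
        _ = C * (((ν * k).factorial : ℝ) * C ^ k) := by ring
        _ ≤ C * (((ν * k : ℕ) : ℝ) ^ (ν * k) * (C + 1) ^ (ν * k)) := by gcongr
        _ = C * (((ν * k : ℕ) : ℝ) * (C + 1)) ^ (ν * k) := by rw [mul_pow]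
        _ ≤ C * (x * Real.exp (-1)) ^ (ν * k) := by gcongr
        _ = _ := by rw [mul_pow]; ring
    have h7 := le_of_mul_le_mul_left h6 (by positivity)
    refine h7.trans ?_
    rw [mul_assoc, ← Real.exp_add, ← Real.exp_nat_mul]
    gcongr
    push_cast
    have h8 : 1 / (Real.exp 1 * (C + 1)) * x ≤ (k + 1) * ν := by
      rw [one_div_mul_eq_div, div_le_iff₀ (by positivity)]
      linarith
    linarith
  · rintro ⟨B, hB, L, hL, H⟩
    set S := ∑' j, 1 / lam j ^ p₀ with hS
    have hS0 : 0 ≤ S := tsum_nonneg (fun j => by have := hlam j; positivity)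
    set K : ℝ := ((ν * p₀).factorial : ℝ) / L ^ (ν * p₀) with hK
    have hK0 : 0 < K := by positivity
    set M : ℝ := (2 / L) ^ ν with hM
    have hM0 : 0 < M := by positivity
    have hterm : ∀ k j, lam j ^ (2 * k) * ‖f j‖ ^ 2 ≤
        (((ν * k).factorial : ℝ) ^ 2 * M ^ (2 * k) * (B ^ 2 * K)) * (1 / lam j ^ p₀) := by
      intro k j
      have hl := hlam j
      have hx := hxpos j
      have hxp := hxpow j
      have hf := H j
      set x := lam j ^ (1 / (ν : ℝ)) with hxdef
      have e1 : (L * x / 2) ^ (ν * k) ≤ Real.exp (L * x / 2) * (ν * k).factorial := by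
        have := Real.pow_div_factorial_le_exp (L * x / 2) (by positivity) (ν * k)
        rwa [div_le_iff₀ (by positivity)] at this
      have e2 : (L * x) ^ (ν * p₀) ≤ Real.exp (L * x) * (ν * p₀).factorial := by
        have := Real.pow_div_factorial_le_exp (L * x) (by positivity) (ν * p₀)
        rwa [div_le_iff₀ (by positivity)] at this
      have a1 : lam j ^ k ≤ M ^ k * (Real.exp (L * x / 2) * (ν * k).factorial) := by
        calc lam j ^ k = M ^ k * (L * x / 2) ^ (ν * k) := by
              rw [← hxp, hM, ← pow_mul, ← pow_mul, ← mul_pow]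
              congr 1
              field_simp
          _ ≤ _ := by gcongr
      have a2 : Real.exp (-(L * x)) ≤ K * (1 / lam j ^ p₀) := by
        rw [Real.exp_neg, hK, ← hxp, ← pow_mul, div_mul_div_comm, mul_one, ← mul_pow,
          le_div_iff₀ (by positivity), inv_mul_le_iff₀ (Real.exp_pos _)]
        exact e2
      have e3 : Real.exp (L * x / 2) ^ 2 * Real.exp (-(L * x)) ^ 2 = Real.exp (-(L * x)) := by
        rw [← Real.exp_nat_mul, ← Real.exp_nat_mul, ← Real.exp_add]
        congr 1
        push_cast
        ring
      calc lam j ^ (2 * k) * ‖f j‖ ^ 2 = (lam j ^ k) ^ 2 * ‖f j‖ ^ 2 := by ring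
        _ ≤ (M ^ k * (Real.exp (L * x / 2) * (ν * k).factorial)) ^ 2 *
            (B * Real.exp (-(L * x))) ^ 2 := by gcongr
        _ = (((ν * k).factorial : ℝ) ^ 2 * M ^ (2 * k) * B ^ 2) *
            (Real.exp (L * x / 2) ^ 2 * Real.exp (-(L * x)) ^ 2) := by ring
        _ = (((ν * k).factorial : ℝ) ^ 2 * M ^ (2 * k) * B ^ 2) * Real.exp (-(L * x)) := by
            rw [e3]
        _ ≤ (((ν * k).factorial : ℝ) ^ 2 * M ^ (2 * k) * B ^ 2) * (K * (1 / lam j ^ p₀)) := by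
            gcongr
        _ = _ := by ring
    have hBK : 0 ≤ B ^ 2 * K * S := by positivity
    refine ⟨1 + M + B ^ 2 * K * S, by positivity, fun k => ?_⟩
    have hs2 := hp₀.mul_left (((ν * k).factorial : ℝ) ^ 2 * M ^ (2 * k) * (B ^ 2 * K))
    have hs1 : Summable (fun j => lam j ^ (2 * k) * ‖f j‖ ^ 2) :=
      Summable.of_nonneg_of_le (fun j => by have := hlam j; positivity) (hterm k) hs2
    refine ⟨hs1, ?_⟩
    have h1 := hs1.tsum_le_tsum (hterm k) hs2
    rw [tsum_mul_left] at h1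
    refine h1.trans ?_
    set Q := 1 + M + B ^ 2 * K * S with hQ
    have q1 : M ≤ Q := by linarith
    have q2 : B ^ 2 * K * S ≤ Q ^ 2 := by nlinarith
    calc ((ν * k).factorial : ℝ) ^ 2 * M ^ (2 * k) * (B ^ 2 * K) * S
        = ((ν * k).factorial : ℝ) ^ 2 * (M ^ (2 * k) * (B ^ 2 * K * S)) := by ring
      _ ≤ ((ν * k).factorial : ℝ) ^ 2 * (Q ^ (2 * k) * Q ^ 2) := by gcongr
      _ = _ := by rw [pow_add]
end

section
/- Let ν ≥ 1 be an integer and (M_k)_{k∈ℕ} a sequence of positive reals satisfying (M.0) and (G), with associated function M(r) := sup_{k∈ℕ} log(r^{νk}/M_{νk}). Let (λ_j)_{j≥1} be positive reals with λ_j ≥ λ₁ > 0 for all j and ∑_{j≥1} λ_j^{−p₀} < ∞ for some p₀ ∈ ℕ. Then for every δ > 0 and L > 0 the series ∑_{j≥1} exp(−δ·M(L·λ_j^{1/ν})) converges. -/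
theorem stmt_12 (ν : ℕ) (hν : 1 ≤ ν) (Mk : ℕ → ℝ) (hMpos : ∀ k, 0 < Mk k)
    (hM0 : Mk 0 = 1)
    (hG : ∃ C₀ > (0 : ℝ), ∃ l > (0 : ℝ), ∀ k : ℕ, (k.factorial : ℝ) ≤ C₀ * l ^ k * Mk k)
    (lam : ℕ → ℝ) (hlam : ∀ j, 0 < lam j) (hlb : ∀ j, lam 0 ≤ lam j)
    (p₀ : ℕ) (hp₀ : Summable (fun j => 1 / lam j ^ p₀)) :
    ∀ δ : ℝ, 0 < δ → ∀ L : ℝ, 0 < L →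
      Summable (fun j => Real.exp (-(δ * assocM ν Mk (L * lam j ^ (1 / (ν : ℝ)))))) := by
  intro δ hδ L hL
  obtain ⟨C₀, hC₀, l, hl, hG⟩ := hG
  have hbdd : ∀ r : ℝ, 0 < r →
      BddAbove (Set.range fun k : ℕ => Real.log (r ^ (ν * k) / Mk (ν * k))) := by
    intro r hr
    refine ⟨Real.log (C₀ * Real.exp (l * r)), ?_⟩
    rintro _ ⟨k, rfl⟩
    have hM := hMpos (ν * k)
    apply Real.log_le_log (by positivity)
    rw [div_le_iff₀ hM]
    have h1 := Real.pow_div_factorial_le_exp (l * r) (by positivity) (ν * k)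
    have hf : (0 : ℝ) < ((ν * k).factorial : ℝ) := by positivity
    rw [div_le_iff₀ hf, mul_pow] at h1
    have h2 := hG (ν * k)
    have hlp : 0 < l ^ (ν * k) := by positivity
    have h3 : l ^ (ν * k) * r ^ (ν * k) ≤
        l ^ (ν * k) * (C₀ * Real.exp (l * r) * Mk (ν * k)) := by
      calc _ ≤ _ := h1
        _ ≤ Real.exp (l * r) * (C₀ * l ^ (ν * k) * Mk (ν * k)) := by gcongr
        _ = _ := by ring
    exact le_of_mul_le_mul_left h3 hlp
  obtain ⟨k, hk⟩ := exists_nat_ge ((p₀ : ℝ) / δ)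
  rw [div_le_iff₀ hδ] at hk
  set c : ℝ := Real.log (L ^ (ν * k) / Mk (ν * k)) with hc
  refine Summable.of_nonneg_of_le (fun j => (Real.exp_pos _).le) (fun j => ?_)
    (hp₀.mul_left (Real.exp (-(δ * c) - (k * δ - p₀) * Real.log (lam 0))))
  have hj := hlam j
  have hr : 0 < L * lam j ^ (1 / (ν : ℝ)) := by positivity
  have h1 : Real.log ((L * lam j ^ (1 / (ν : ℝ))) ^ (ν * k) / Mk (ν * k)) ≤
      assocM ν Mk (L * lam j ^ (1 / (ν : ℝ))) := le_ciSup (hbdd _ hr) k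
  have hpow : (lam j ^ (1 / (ν : ℝ))) ^ (ν * k) = lam j ^ k := by
    rw [pow_mul, one_div, Real.rpow_inv_natCast_pow hj.le (by omega)]
  have hM := hMpos (ν * k)
  have h2 : Real.log ((L * lam j ^ (1 / (ν : ℝ))) ^ (ν * k) / Mk (ν * k)) =
      c + k * Real.log (lam j) := by
    rw [mul_pow, hpow, hc, ← Real.log_pow, ← Real.log_mul (by positivity) (by positivity)]
    congr 1
    ring
  have h3 : 1 / lam j ^ p₀ = Real.exp (-(p₀ * Real.log (lam j))) := by
    rw [Real.exp_neg, ← Real.log_pow, Real.exp_log (by positivity), one_div]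
  rw [h3, ← Real.exp_add, Real.exp_le_exp]
  rw [h2] at h1
  have h4 := Real.log_le_log (hlam 0) (hlb j)
  have h5 := mul_le_mul_of_nonneg_left h1 hδ.le
  have h6 := mul_le_mul_of_nonneg_left h4 (sub_nonneg.2 hk)
  linarith
end

section
/- Let ν ≥ 1 be an integer and (M_k)_{k∈ℕ} a sequence of positive reals satisfying (M.0), (M.2) and (G), with associated function M(r) := sup_{k∈ℕ} log(r^{νk}/M_{νk}). Let d : ℕ → ℕ and let (λ_l)_{l≥1} be positive reals with λ_l ≥ λ₁ > 0 for all l, satisfying d_l ≤ C₁·(1+λ_l)^κ for some constants C₁, κ > 0 and all l ≥ 1. Let v = (v_l) with v_l ∈ ℂ^{d_l} be such that for every block sequence a = (a_l), a_l ∈ ℂ^{d_l}, satisfying ‖a_l‖ ≤ C·exp(−M(L·λ_l^{1/ν})) for some C, L > 0 and all l ≥ 1, one has ∑_{l≥1} ∑_{j=1}^{d_l} |v_l(j)|·|a_l(j)| < ∞. Then for every L > 0 the series ∑_{l≥1} exp(−M(L·λ_l^{1/ν}))·‖v_l‖ converges, where ‖·‖ is the Euclidean (Hilbert–Schmidt)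 norm on ℂ^{d_l}. -/
theorem stmt_14 (ν : ℕ) (hν : 1 ≤ ν) (Mk : ℕ → ℝ) (hMpos : ∀ k, 0 < Mk k)
    (hM0 : Mk 0 = 1)
    (A H : ℝ) (hA : 1 ≤ A) (hH : 1 ≤ H)
    (hM2 : ∀ k : ℕ, Mk (2 * k) ≤ A * H ^ (2 * k) * Mk k ^ 2)
    (hG : ∃ C₀ > (0 : ℝ), ∃ l > (0 : ℝ), ∀ k : ℕ, (k.factorial : ℝ) ≤ C₀ * l ^ k * Mk k)
    (d : ℕ → ℕ) (lam : ℕ → ℝ) (hlam : ∀ l, 0 < lam l) (hlb : ∀ l, lam 0 ≤ lam l)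
    (C₁ κ : ℝ) (hC₁ : 0 < C₁) (hκ : 0 < κ)
    (hd : ∀ l, (d l : ℝ) ≤ C₁ * (1 + lam l) ^ κ)
    (v : (l : ℕ) → EuclideanSpace ℂ (Fin (d l)))
    (hv : ∀ a : (l : ℕ) → EuclideanSpace ℂ (Fin (d l)),
      (∃ C > (0 : ℝ), ∃ L > (0 : ℝ), ∀ l,
        ‖a l‖ ≤ C * Real.exp (-(assocM ν Mk (L * lam l ^ (1 / (ν : ℝ)))))) →
      Summable (fun l => ∑ j : Fin (d l), ‖v l j‖ * ‖a l j‖)) :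
    ∀ L : ℝ, 0 < L →
      Summable (fun l => Real.exp (-(assocM ν Mk (L * lam l ^ (1 / (ν : ℝ))))) * ‖v l‖) := by
  intro L hL
  have key := hv (fun l => ((Real.exp (-(assocM ν Mk (L * lam l ^ (1 / (ν : ℝ))))) *
      ‖v l‖⁻¹ : ℝ) : ℂ) • v l) ⟨1, one_pos, L, hL, fun l => by
    rw [norm_smul, Complex.norm_real, Real.norm_of_nonneg (by positivity), one_mul, mul_assoc]
    exact mul_le_of_le_one_right (Real.exp_pos _).le inv_mul_le_one⟩
  refine key.congr fun l => ?_
  have hsq : ∑ j : Fin (d l), ‖v l j‖ ^ 2 = ‖v l‖ ^ 2 := (EuclideanSpace.norm_sq_eq (v l)).symm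
  have hterm : ∀ j : Fin (d l), ‖v l j‖ * ‖(((Real.exp (-(assocM ν Mk (L * lam l ^ (1 / (ν : ℝ)))))
      * ‖v l‖⁻¹ : ℝ) : ℂ) • v l) j‖ =
      (Real.exp (-(assocM ν Mk (L * lam l ^ (1 / (ν : ℝ))))) * ‖v l‖⁻¹) * ‖v l j‖ ^ 2 := by
    intro j
    rw [PiLp.smul_apply, norm_smul, Complex.norm_real, Real.norm_of_nonneg (by positivity)]
    ring
  rw [Finset.sum_congr rfl fun j _ => hterm j, ← Finset.mul_sum, hsq]
  by_cases h : ‖v l‖ = 0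
  · simp [h]
  · field_simp
end

section
/- Let ν ≥ 1 be an integer and (M_k)_{k∈ℕ} a sequence of positive reals satisfying (M.0), (M.2) with constants A ≥ 1, H ≥ 1 and (G), with associated function M(r) := sup_{k∈ℕ} log(r^{νk}/M_{νk}). Let (λ_l)_{l≥1} be positive reals with λ_l ≥ λ₁ > 0 for all l and ∑_{l≥1} λ_l^{−p₀} < ∞ for some p₀ ∈ ℕ, and let (b_l)_{l≥1} be nonnegative reals such that for every L > 0 there exists K_L > 0 with b_l ≤ K_L·exp(M(L·λ_l^{1/ν})) for all l ≥ 1. Then for every L > 0 the series ∑_{l≥1} exp(−M(L·λ_l^{1/ν}))·b_l converges. -/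
theorem assocM_bdd (ν : ℕ) (Mk : ℕ → ℝ) (hMpos : ∀ k, 0 < Mk k)
    (hG : ∃ C₀ > (0 : ℝ), ∃ l > (0 : ℝ), ∀ k : ℕ, (k.factorial : ℝ) ≤ C₀ * l ^ k * Mk k)
    (r : ℝ) (hr : 0 < r) :
    BddAbove (Set.range fun k : ℕ => Real.log (r ^ (ν * k) / Mk (ν * k))) := by
  obtain ⟨C, hC, l, hl, h⟩ := hG
  refine ⟨Real.log (C * Real.exp (l * r)), ?_⟩
  rintro _ ⟨k, rfl⟩
  have hm := hMpos (ν * k)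
  apply Real.log_le_log (by positivity)
  have h1 := Real.pow_div_factorial_le_exp (l * r) (by positivity) (ν * k)
  have hf : (0 : ℝ) < ((ν * k).factorial : ℝ) := by exact_mod_cast Nat.factorial_pos _
  rw [div_le_iff₀ hf] at h1
  rw [div_le_iff₀ hm]
  have h2 := h (ν * k)
  have hlp : 0 < l ^ (ν * k) := by positivity
  have h3 : l ^ (ν * k) * r ^ (ν * k) ≤
      l ^ (ν * k) * (C * Real.exp (l * r) * Mk (ν * k)) := by
    calc l ^ (ν * k) * r ^ (ν * k) = (l * r) ^ (ν * k) := by rw [mul_pow]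
      _ ≤ _ := h1
      _ ≤ Real.exp (l * r) * (C * l ^ (ν * k) * Mk (ν * k)) := by gcongr
      _ = _ := by ring
  exact le_of_mul_le_mul_left h3 hlp

theorem assocM_two (ν : ℕ) (Mk : ℕ → ℝ) (hMpos : ∀ k, 0 < Mk k)
    (A H : ℝ) (hA : 1 ≤ A) (hH : 1 ≤ H)
    (hM2 : ∀ k : ℕ, Mk (2 * k) ≤ A * H ^ (2 * k) * Mk k ^ 2)
    (hG : ∃ C₀ > (0 : ℝ), ∃ l > (0 : ℝ), ∀ k : ℕ, (k.factorial : ℝ) ≤ C₀ * l ^ k * Mk k)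
    (r : ℝ) (hr : 0 < r) :
    2 * assocM ν Mk r ≤ Real.log A + assocM ν Mk (H * r) := by
  have hH0 : 0 < H := by linarith
  have hA0 : 0 < A := by linarith
  suffices assocM ν Mk r ≤ (Real.log A + assocM ν Mk (H * r)) / 2 by linarith
  apply ciSup_le
  intro k
  have hb := le_ciSup (assocM_bdd ν Mk hMpos hG (H * r) (by positivity)) (2 * k)
  change _ ≤ assocM ν Mk (H * r) at hb
  have hm := hMpos (ν * k)
  have hm2 := hMpos (ν * (2 * k))
  have e : 2 * Real.log (r ^ (ν * k) / Mk (ν * k)) ≤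
      Real.log A + Real.log ((H * r) ^ (ν * (2 * k)) / Mk (ν * (2 * k))) := by
    rw [← Real.log_mul (by positivity) (by positivity)]
    have : 2 * Real.log (r ^ (ν * k) / Mk (ν * k))
        = Real.log ((r ^ (ν * k) / Mk (ν * k)) ^ 2) := by
      rw [Real.log_pow]; norm_num
    rw [this]
    apply Real.log_le_log (by positivity)
    have h2 := hM2 (ν * k)
    have e2 : ν * (2 * k) = 2 * (ν * k) := by ring
    rw [e2] at hm2 ⊢
    rw [div_pow, mul_div_assoc', div_le_div_iff₀ (by positivity) hm2]
    calc (r ^ (ν * k)) ^ 2 * Mk (2 * (ν * k))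
        ≤ (r ^ (ν * k)) ^ 2 * (A * H ^ (2 * (ν * k)) * Mk (ν * k) ^ 2) := by gcongr
      _ = _ := by rw [mul_pow, ← pow_mul, mul_comm (ν * k) 2]; ring
  linarith

theorem stmt_15 (ν : ℕ) (hν : 1 ≤ ν) (Mk : ℕ → ℝ) (hMpos : ∀ k, 0 < Mk k)
    (hM0 : Mk 0 = 1)
    (A H : ℝ) (hA : 1 ≤ A) (hH : 1 ≤ H)
    (hM2 : ∀ k : ℕ, Mk (2 * k) ≤ A * H ^ (2 * k) * Mk k ^ 2)
    (hG : ∃ C₀ > (0 : ℝ), ∃ l > (0 : ℝ), ∀ k : ℕ, (k.factorial : ℝ) ≤ C₀ * l ^ k * Mk k)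
    (lam : ℕ → ℝ) (hlam : ∀ l, 0 < lam l) (hlb : ∀ l, lam 0 ≤ lam l)
    (p₀ : ℕ) (hp₀ : Summable (fun l => 1 / lam l ^ p₀))
    (b : ℕ → ℝ) (hb : ∀ l, 0 ≤ b l)
    (hbd : ∀ L : ℝ, 0 < L → ∃ K : ℝ, 0 < K ∧ ∀ l,
      b l ≤ K * Real.exp (assocM ν Mk (L * lam l ^ (1 / (ν : ℝ))))) :
    ∀ L : ℝ, 0 < L →
      Summable (fun l => Real.exp (-(assocM ν Mk (L * lam l ^ (1 / (ν : ℝ))))) * b l) := by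
  intro L hL
  have hH0 : 0 < H := by linarith
  have hA0 : 0 < A := by linarith
  have hL' : 0 < L / H := by positivity
  obtain ⟨K, hK, hKb⟩ := hbd (L / H) hL'
  have hmp := hMpos (ν * p₀)
  refine Summable.of_nonneg_of_le (fun l => mul_nonneg (Real.exp_pos _).le (hb l)) (fun l => ?_)
    (hp₀.mul_left (A * K * (Mk (ν * p₀) / (L / H) ^ (ν * p₀))))
  have hl := hlam l
  set x := lam l ^ (1 / (ν : ℝ)) with hx
  have hx0 : 0 < x := Real.rpow_pos_of_pos hl _
  have hxp : x ^ (ν * p₀) = lam l ^ p₀ := by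
    rw [pow_mul, hx, one_div, Real.rpow_inv_natCast_pow hl.le (by omega)]
  have h2 := assocM_two ν Mk hMpos A H hA hH hM2 hG (L / H * x) (by positivity)
  have e : H * (L / H * x) = L * x := by field_simp
  rw [e] at h2
  have h1 := le_ciSup (assocM_bdd ν Mk hMpos hG (L / H * x) (by positivity)) p₀
  change Real.log ((L / H * x) ^ (ν * p₀) / Mk (ν * p₀)) ≤ assocM ν Mk (L / H * x) at h1
  have hB := hKb l
  rw [← hx] at hB
  set m := assocM ν Mk (L / H * x)
  calc Real.exp (-(assocM ν Mk (L * x))) * b l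
      ≤ Real.exp (Real.log A - 2 * m) * (K * Real.exp m) := by
        refine mul_le_mul (Real.exp_le_exp.mpr ?_) hB (hb l) (Real.exp_pos _).le
        linarith
    _ = A * K * Real.exp (-m) := by
        have : Real.exp (-m) = Real.exp (-(2 * m)) * Real.exp m := by
          rw [← Real.exp_add]; ring_nf
        rw [sub_eq_add_neg, Real.exp_add, Real.exp_log hA0, this]; ring
    _ ≤ A * K * Real.exp (-Real.log ((L / H * x) ^ (ν * p₀) / Mk (ν * p₀))) := by
        gcongr
    _ = _ := by
        rw [Real.exp_neg, Real.exp_log (by positivity), mul_pow, hxp]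
        field_simp
end
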